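/- (Partial Permutation MMT) For an n×n matrix A and n-vectors θ, φ, Σ_{r} (1/r!) pperm_{β,θ,φ} A(n^r,n^r) = exp(θ(I-A)^{-1}φ^T) / det(I-A)^β, where the sum is over all n-tuples r of non-negative integers, and pperm_{β,θ,φ} A(n^r,n^r) uses the vectors with entry θ_i (resp. φ_i) repeated r_i times. -/

import Mathlib

open scoped Classical
open Matrix

noncomputable section

/-- A partial permutation (injective partial map) of `α`: a domain together with
an injection of the domain into `α`. -/
abbrev PPerm (α : Type*) [Fintype α] [DecidableEq α] :=
  (D : Finset α) × ({x // x ∈ D} ↪ α)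

variable {α : Type*} [Fintype α] [DecidableEq α]

/-- The partial function determined by a partial permutation. -/
def pfun (ψ : PPerm α) : α → Option α :=
  fun x => if h : x ∈ ψ.1 then some (ψ.2 ⟨x, h⟩) else none

/-- `k`-fold iteration of a partial permutation. -/
def piter (ψ : PPerm α) (k : ℕ) (x : α) : Option α :=
  (fun o => o.bind (pfun ψ))^[k] (some x)

/-- The image of a partial permutation. -/
def pim (ψ : PPerm α) : Finset α := Finset.univ.image fun d => ψ.2 d

/-- `x` lies on a closed cycle of the partial permutation `ψ`. -/
def isCyc (ψ : PPerm α) (x : α) : Prop :=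
  ∃ k ∈ Finset.range (Fintype.card α + 1), k ≠ 0 ∧ piter ψ k x = some x

/-- The forward orbit of `x` under `ψ`. -/
def porb (ψ : PPerm α) (x : α) : Finset α :=
  Finset.univ.filter fun y => ∃ k ∈ Finset.range (Fintype.card α + 1), piter ψ k x = some y

/-- The number of cycles `C(π_ψ)` of the permutation part of `ψ`. -/
def pCycleCount (ψ : PPerm α) : ℕ :=
  ((Finset.univ.filter fun x => isCyc ψ x).image (porb ψ)).card

/-- The `(β,θ,φ)`-extended partial permanent of a matrix. -/
def ppermB {R : Type*} [CommRing R] (β : R) (θ φ : α → R) (M : Matrix α α R) : R :=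
  ∑ ψ : PPerm α, β ^ pCycleCount ψ * (∏ d : {x // x ∈ ψ.1}, M d (ψ.2 d)) *
    (∏ j ∈ Finset.univ \ pim ψ, θ j) * (∏ k ∈ Finset.univ \ ψ.1, φ k)

/-- `A(n^r, n^r)`: index `i` repeated `r i` times. -/
def repA {n : ℕ} {R : Type*} (A : Matrix (Fin n) (Fin n) R) (r : Fin n → ℕ) :
    Matrix ((i : Fin n) × Fin (r i)) ((i : Fin n) × Fin (r i)) R :=
  fun k l => A k.1 l.1

/-!
The idea is to group the sum over `r` by `m = ∑ i, r i`. A multi-index `r` arises from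
`m! / ∏ i, (r i)!` colourings `Fin m → ι`, so the terms of degree `m` add up to `s m / m!`, where
`s m` is the sum of the extended partial permanents of all coloured matrices of size `m`.

A partial permutation of `Option V` is obtained from one of `V` by making the new point a fixed
point or an isolated point, or by inserting it before the start of a path, after its end, or inside
an arrow. Summed over the colours of the new point this multiplies by `β tr A + θ φᵀ` or replaces
one factor by an entry of `θ A`, `A φ` or `A²`, which is a derivation. As `θ N`, `N φ` and `A N`
with `N = (1 - t A)⁻¹` have the `t`-derivatives `(θ N) (A N)`, `(A N) (N φ)` and `(A N) (A N)`, and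
`E t = exp (t θ N φᵀ) / det (1 - t A) ^ β` has the logarithmic derivative
`β tr (A N) + (θ N) (N φ)ᵀ`, the `m`-th derivative of `E` is `E` times `s m` evaluated at `θ N`,
`N φ`, `A N`. Hence `s m / m!` are the Taylor coefficients of `E` at `0`, and the theorem is the
Taylor expansion of `E` at `t = 1`. The same expansion for the absolute values of `β`, `θ`, `φ` and
`A` dominates the sum over `r`, which justifies the grouping by degree.
-/

section Cycles

variable {V W : Type*}

/-- `Reaches g x y` says that a positive number of applications of the partial function `g` leads
from `x` to `y`. -/
def Reaches (g : V → Option V) : V → V → Prop := Relation.TransGen fun x y => g x = some y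

/-- The cycles of a partial function, each encoded as the set of points reachable from a point
of it. -/
def cycles (g : V → Option V) : Set (Set V) := (fun x => {y | Reaches g x y}) '' {x | Reaches g x x}

/-- The number of cycles of a partial function, the `C(π_g)` of the paper. -/
def cycleCount (g : V → Option V) : ℕ := (cycles g).ncard

lemma Reaches.lift {g : V → Option V} {h : W → Option W} (f : V → W)
    (hf : ∀ a b, g a = some b → Reaches h (f a) (f b)) {x y : V} (hxy : Reaches g x y) :
    Reaches h (f x) (f y) := by
  induction hxy with
  | single hxy => exact hf _ _ hxy
  | tail _ hyz ih => exact ih.trans (hf _ _ hyz)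

lemma setOf_reaches_congr {g : V → Option V} {x y : V} (hxy : Reaches g x y) (hyx : Reaches g y x) :
    {z | Reaches g x z} = {z | Reaches g y z} :=
  Set.ext fun _ => ⟨hyx.trans, hxy.trans⟩

section Embedding

variable {g : V → Option V} {h : W → Option W} {f : V → W}

lemma ncard_cycles_through (hf : ∀ a b, Reaches h (f a) (f b) ↔ Reaches g a b) :
    ((fun a => {y | Reaches h (f a) y}) '' {a | Reaches g a a}).ncard = cycleCount g := by
  have preimage_orbit (a : V) : f ⁻¹' {y | Reaches h (f a) y} = {b | Reaches g a b} :=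
    Set.ext (hf a)
  have image_preimage : cycles g =
      (f ⁻¹' ·) '' ((fun a => {y | Reaches h (f a) y}) '' {a | Reaches g a a}) := by
    rw [cycles, Set.image_image]
    exact Set.image_congr fun a _ => (preimage_orbit a).symm
  rw [cycleCount, image_preimage]
  refine (Set.InjOn.ncard_image ?_).symm
  rintro _ ⟨a, ha, rfl⟩ _ ⟨b, hb, rfl⟩ hab
  have orbit_eq : {c | Reaches g a c} = {c | Reaches g b c} := by
    simpa only [preimage_orbit] using hab
  have hab : Reaches g a b := orbit_eq.symm.subset hb
  have hba : Reaches g b a := orbit_eq.subset ha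
  exact setOf_reaches_congr ((hf a b).2 hab) ((hf b a).2 hba)

lemma cycleCount_eq_of_reaches_iff (hf : ∀ a b, Reaches h (f a) (f b) ↔ Reaches g a b)
    (meets : ∀ x, Reaches h x x → ∃ a, Reaches h x (f a) ∧ Reaches h (f a) x) :
    cycleCount h = cycleCount g := by
  rw [← ncard_cycles_through hf, cycleCount]
  congr 1
  apply Set.Subset.antisymm
  · rintro _ ⟨x, hx, rfl⟩
    obtain ⟨a, hxa, hax⟩ := meets x hx
    exact ⟨a, (hf a a).1 (hax.trans hxa), setOf_reaches_congr hax hxa⟩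
  · rintro _ ⟨a, ha, rfl⟩
    exact ⟨f a, (hf a a).2 ha, rfl⟩

end Embedding

end Cycles

section PCycleCount

lemma exists_lt_card_iterate_eq {X : Type*} (f : X → X) (a : X) (s : Finset X) {k : ℕ}
    (hk : ∀ i ≤ k, f^[i] a ∈ s) : ∃ j < s.card, f^[j] a = f^[k] a := by
  induction k using Nat.strong_induction_on with
  | _ k ih =>
    by_cases hcard : k < s.card
    · exact ⟨k, hcard, rfl⟩
    have : s.card < (Finset.range (k + 1)).card := by simpa using by omega
    obtain ⟨i, hi, j, hj, hne, hij⟩ := Finset.exists_ne_map_eq_of_card_lt_of_maps_to this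
      (f := fun i => f^[i] a) fun i hi => hk i (by simpa [Nat.lt_succ_iff] using hi)
    wlog hlt : i < j generalizing i j
    · exact this j hj i hi hne.symm hij.symm (by omega)
    have hjk : j ≤ k := by simpa [Nat.lt_succ_iff] using hj
    have shortcut : f^[k - (j - i)] a = f^[k] a := by
      rw [show k - (j - i) = (k - j) + i by omega, Function.iterate_add_apply, hij,
        ← Function.iterate_add_apply, Nat.sub_add_cancel hjk]
    obtain ⟨l, hl, hla⟩ := ih (k - (j - i)) (by omega) fun i hi => hk i (by omega)
    exact ⟨l, hl, hla.trans shortcut⟩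

lemma piter_succ (ψ : PPerm α) (k : ℕ) (x : α) :
    piter ψ (k + 1) x = (piter ψ k x).bind (pfun ψ) :=
  Function.iterate_succ_apply' ..

lemma reaches_of_piter_eq {ψ : PPerm α} {k : ℕ} {x y : α} (h : piter ψ (k + 1) x = some y) :
    Reaches (pfun ψ) x y := by
  induction k generalizing y with
  | zero => exact .single h
  | succ k ih =>
    rw [piter_succ] at h
    obtain ⟨z, hz, hzy⟩ := Option.bind_eq_some_iff.1 h
    exact (ih hz).tail hzy

lemma exists_piter_eq_of_reaches {ψ : PPerm α} {x y : α} (h : Reaches (pfun ψ) x y) :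
    ∃ k, piter ψ (k + 1) x = some y := by
  induction h with
  | single h => exact ⟨0, h⟩
  | tail _ hyz ih =>
    obtain ⟨k, hk⟩ := ih
    exact ⟨k + 1, by rw [piter_succ, hk]; exact hyz⟩

lemma piter_ne_none_of_le {ψ : PPerm α} {i k : ℕ} {x y : α} (hik : i ≤ k)
    (h : piter ψ k x = some y) : piter ψ i x ≠ none := by
  induction k, hik using Nat.le_induction generalizing y with
  | base => simp [h]
  | succ k _ ih =>
    rw [piter_succ] at h
    obtain ⟨z, hz, -⟩ := Option.bind_eq_some_iff.1 h
    exact ih hz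

lemma reaches_pfun_iff {ψ : PPerm α} {x y : α} :
    Reaches (pfun ψ) x y ↔ ∃ k < Fintype.card α, piter ψ (k + 1) x = some y := by
  refine ⟨fun h => ?_, fun ⟨k, _, hk⟩ => reaches_of_piter_eq hk⟩
  obtain ⟨k, hk⟩ := exists_piter_eq_of_reaches h
  have defined (i : ℕ) (hi : i ≤ k) :
      (fun o => o.bind (pfun ψ))^[i] (pfun ψ x) ∈ Finset.univ.map (.some : α ↪ Option α) := by
    obtain ⟨z, hz⟩ := Option.ne_none_iff_exists.1
      (piter_ne_none_of_le (Nat.succ_le_succ hi) hk)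
    exact Finset.mem_map.2 ⟨z, Finset.mem_univ z, hz⟩
  obtain ⟨j, hj, hjk⟩ := exists_lt_card_iterate_eq _ _ _ defined
  exact ⟨j, by simpa using hj, hjk.trans hk⟩

lemma isCyc_iff {ψ : PPerm α} {x : α} : isCyc ψ x ↔ Reaches (pfun ψ) x x := by
  rw [reaches_pfun_iff, isCyc]
  constructor
  · rintro ⟨k, hk, hk0, h⟩
    obtain ⟨k, rfl⟩ := Nat.exists_eq_succ_of_ne_zero hk0
    exact ⟨k, by simpa using hk, h⟩
  · rintro ⟨k, hk, h⟩
    exact ⟨k + 1, by simpa using hk, k.succ_ne_zero, h⟩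

lemma coe_porb {ψ : PPerm α} {x : α} (hx : Reaches (pfun ψ) x x) :
    (porb ψ x : Set α) = {y | Reaches (pfun ψ) x y} := by
  ext y
  simp only [porb, Finset.coe_filter, Finset.mem_univ, true_and, Set.mem_ofPred_eq,
    reaches_pfun_iff]
  constructor
  · rintro ⟨_ | k, hk, h⟩
    · obtain rfl : x = y := Option.some_injective _ h
      exact reaches_pfun_iff.1 hx
    · exact ⟨k, by simpa using hk, h⟩
  · rintro ⟨k, hk, h⟩
    exact ⟨k + 1, by simpa using hk, h⟩

lemma pCycleCount_eq_cycleCount (ψ : PPerm α) : pCycleCount ψ = cycleCount (pfun ψ) := by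
  have cycles_eq : cycles (pfun ψ) =
      (↑) '' (((Finset.univ.filter fun x => isCyc ψ x).image (porb ψ) : Finset (Finset α)) :
        Set (Finset α)) := by
    rw [Finset.coe_image, Set.image_image]
    simp only [Finset.coe_filter, Finset.mem_univ, true_and, isCyc_iff]
    exact (Set.image_congr fun x hx => coe_porb hx).symm
  rw [cycleCount, cycles_eq, Set.ncard_image_of_injective _ Finset.coe_injective,
    Set.ncard_coe_finset, pCycleCount]

end PCycleCount

section PartialEquiv

variable {V W R : Type*} [CommRing R]

instance [Finite V] : Finite (V ≃. V) := Finite.of_injective _ DFunLike.coe_injective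

instance [Finite V] : Fintype (V ≃. V) := Fintype.ofFinite _

/-- The weight `∏_{x ∈ dom g} M_{x,g(x)} · ∏_{j ∉ im g} θ_j · ∏_{x ∉ dom g} φ_x` of a partial
permutation; the last factor is merged with the first. -/
def weight [Fintype V] (θ φ : V → R) (M : Matrix V V R) (g : V ≃. V) : R :=
  (∏ x, (g x).elim (φ x) (M x)) * ∏ j, (g.symm j).elim (θ j) fun _ => 1

lemma pfun_eq_some_iff {ψ : PPerm α} {x y : α} :
    pfun ψ x = some y ↔ ∃ h : x ∈ ψ.1, ψ.2 ⟨x, h⟩ = y := by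
  rw [pfun]
  split_ifs with h <;> simp [h]

lemma pfun_injective : Function.Injective (pfun : PPerm α → α → Option α) := by
  rintro ⟨D, f⟩ ⟨D', f'⟩ h
  have mem_iff (x : α) : x ∈ D ↔ x ∈ D' := by
    simpa [pfun, apply_dite Option.isSome] using congrArg Option.isSome (congrFun h x)
  obtain rfl : D = D' := Finset.ext mem_iff
  congr
  ext ⟨x, hx⟩
  simpa [pfun, hx] using congrFun h x

/-- A partial permutation in the sense of `PPerm`, as a partial equivalence. -/
def PPerm.toPEquiv (ψ : PPerm α) : α ≃. α where
  toFun := pfun ψ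
  invFun y := if h : ∃ x, pfun ψ x = some y then some h.choose else none
  inv x y := by
    by_cases h : ∃ x, pfun ψ x = some y
    · have apply_eq : pfun ψ x = some y ↔ h.choose = x := by
        refine ⟨fun hx => ?_, fun hx => hx ▸ h.choose_spec⟩
        obtain ⟨hc, hcy⟩ := pfun_eq_some_iff.1 h.choose_spec
        obtain ⟨hx, hxy⟩ := pfun_eq_some_iff.1 hx
        exact congrArg Subtype.val (ψ.2.injective (hcy.trans hxy.symm))
      simp [h, apply_eq]
    · simpa [h] using fun hx => h ⟨x, hx⟩

lemma toPEquiv_bijective : Function.Bijective (PPerm.toPEquiv : PPerm α → α ≃. α) := by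
  refine ⟨fun ψ ψ' h => pfun_injective (congrArg (⇑) h), fun g => ?_⟩
  refine ⟨⟨Finset.univ.filter fun x => (g x).isSome,
    fun x => (g x).get (Finset.mem_filter.1 x.2).2, fun x y hxy => ?_⟩, ?_⟩
  · have get_eq : (g x).get _ = (g y).get _ := hxy
    exact Subtype.ext (g.inj (Option.get_mem _) (get_eq.symm ▸ Option.get_mem _))
  · apply PEquiv.ext
    intro x
    change pfun _ x = g x
    cases h : g x with
    | none => simp [pfun, h]
    | some y => exact pfun_eq_some_iff.2 ⟨by simp [h], Option.get_of_mem _ h⟩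

lemma prod_dom_mul_prod_compl (φ : α → R) (M : Matrix α α R) (ψ : PPerm α) :
    (∏ d : {x // x ∈ ψ.1}, M d (ψ.2 d)) * ∏ k ∈ Finset.univ \ ψ.1, φ k =
      ∏ x, (pfun ψ x).elim (φ x) (M x) := by
  rw [← Finset.prod_sdiff (Finset.subset_univ ψ.1), mul_comm, ← Finset.prod_coe_sort ψ.1]
  congr 1
  · exact Finset.prod_congr rfl fun x hx => by simp [pfun, (Finset.mem_sdiff.1 hx).2]
  · exact Finset.prod_congr rfl fun x _ => by simp [pfun]

lemma prod_compl_pim (ψ : PPerm α) (θ : α → R) :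
    ∏ j ∈ Finset.univ \ pim ψ, θ j = ∏ j, (ψ.toPEquiv.symm j).elim (θ j) fun _ => 1 := by
  have symm_eq_none (j : α) : j ∉ pim ψ ↔ ψ.toPEquiv.symm j = none := by
    have mem_pim : j ∈ pim ψ ↔ ∃ x, pfun ψ x = some j := by
      simp [pim, pfun_eq_some_iff]
    simp [mem_pim, Option.eq_none_iff_forall_ne_some, PEquiv.eq_some_iff, PPerm.toPEquiv]
  rw [← Finset.prod_subset (Finset.subset_univ (Finset.univ \ pim ψ))]
  · exact Finset.prod_congr rfl fun j hj => by
      simp [(symm_eq_none j).1 (Finset.mem_sdiff.1 hj).2]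
  · intro j _ hj
    obtain ⟨x, hx⟩ := Option.ne_none_iff_exists'.1 fun h => hj (by simpa using (symm_eq_none j).2 h)
    simp [hx]

lemma ppermB_eq_sum_pequiv (β : R) (θ φ : α → R) (M : Matrix α α R) :
    ppermB β θ φ M = ∑ g : α ≃. α, β ^ cycleCount g * weight θ φ M g := by
  refine Fintype.sum_bijective _ toPEquiv_bijective _ _ fun ψ => ?_
  rw [pCycleCount_eq_cycleCount, mul_right_comm, mul_assoc (β ^ _), prod_dom_mul_prod_compl,
    mul_assoc, prod_compl_pim]
  rfl

/-- Transport of a partial permutation along a bijection. -/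
def conjPEquiv (e : V ≃ W) : (V ≃. V) ≃ (W ≃. W) where
  toFun g := (e.symm.toPEquiv.trans g).trans e.toPEquiv
  invFun h := (e.toPEquiv.trans h).trans e.symm.toPEquiv
  left_inv g := by ext; simp [PEquiv.trans_eq_some, Equiv.toPEquiv_apply]
  right_inv h := by ext; simp [PEquiv.trans_eq_some, Equiv.toPEquiv_apply]

lemma conjPEquiv_apply (e : V ≃ W) (g : V ≃. V) (x : V) : conjPEquiv e g (e x) = (g x).map e := by
  ext
  simp [conjPEquiv, PEquiv.trans_eq_some, Equiv.toPEquiv_apply]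

lemma conjPEquiv_symm_apply (e : V ≃ W) (g : V ≃. V) (x : V) :
    (conjPEquiv e g).symm (e x) = (g.symm x).map e := by
  ext y
  obtain ⟨y, rfl⟩ := e.surjective y
  simp [PEquiv.eq_some_iff, conjPEquiv_apply]

lemma cycleCount_conjPEquiv (e : V ≃ W) (g : V ≃. V) :
    cycleCount (conjPEquiv e g) = cycleCount g := by
  refine cycleCount_eq_of_reaches_iff (f := e) (fun a b => ⟨fun h => ?_, fun h => ?_⟩) fun x hx =>
    ⟨e.symm x, by simpa using hx⟩
  · have reaches_symm := h.lift (h := g) e.symm fun x y hxy => .single <| by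
      obtain ⟨x, rfl⟩ := e.surjective x
      obtain ⟨c, hc, rfl⟩ := Option.map_eq_some_iff.1 (conjPEquiv_apply e g x ▸ hxy)
      simpa using hc
    simpa using reaches_symm
  · exact h.lift e fun a b hab => .single (by rw [conjPEquiv_apply, hab, Option.map_some])

lemma weight_conjPEquiv [Fintype V] [Fintype W] (e : V ≃ W) (g : V ≃. V) (θ φ : W → R)
    (M : Matrix W W R) :
    weight θ φ M (conjPEquiv e g) = weight (θ ∘ e) (φ ∘ e) (M.submatrix e e) g := by
  simp only [weight, ← e.prod_comp, conjPEquiv_apply, conjPEquiv_symm_apply, Option.elim_map]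
  rfl

lemma ppermB_submatrix_equiv [Fintype V] [Fintype W] [DecidableEq V] [DecidableEq W] (e : V ≃ W)
    (β : R) (θ φ : W → R) (M : Matrix W W R) :
    ppermB β (θ ∘ e) (φ ∘ e) (M.submatrix e e) = ppermB β θ φ M := by
  rw [ppermB_eq_sum_pequiv, ppermB_eq_sum_pequiv]
  exact Fintype.sum_equiv (conjPEquiv e) _ _ fun g => by
    rw [cycleCount_conjPEquiv, weight_conjPEquiv]

end PartialEquiv

section PointDeletion

variable {V : Type*}

/-- The partial function on `V` that follows `f`, passing through the point `none` where `f`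
does. -/
def skipNone (f : Option V → Option (Option V)) (u : V) : Option V :=
  (f (some u)).bind fun y => y.elim (f none).join some

lemma skipNone_eq_some {f : Option V → Option (Option V)} {u v : V} :
    skipNone f u = some v ↔
      f (some u) = some (some v) ∨ f (some u) = some none ∧ f none = some (some v) := by
  rcases h : f (some u) with _ | _ | w <;> simp [skipNone, h, Option.join_eq_some_iff]

/-- The partial permutation of `V` obtained by deleting the point `none`, joining its predecessor
to its successor. -/
def bypass (h : Option V ≃. Option V) : V ≃. V where
  toFun := skipNone h
  invFun := skipNone h.symm
  inv u v := by
    simp only [skipNone_eq_some, PEquiv.eq_some_iff]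
    tauto

lemma bypass_eq_some {h : Option V ≃. Option V} {u v : V} :
    bypass h u = some v ↔
      h (some u) = some (some v) ∨ h (some u) = some none ∧ h none = some (some v) :=
  skipNone_eq_some

lemma reaches_bypass_iff {h : Option V ≃. Option V} {u v : V} :
    Reaches h (some u) (some v) ↔ Reaches (bypass h) u v := by
  constructor
  · suffices H : ∀ y, Reaches h (some u) y →
        ∀ v, y = some v ∨ y = none ∧ h none = some (some v) → Reaches (bypass h) u v from
      fun huv => H _ huv v (.inl rfl)
    intro y hy
    induction hy with
    | single huy =>
      rintro v (rfl | ⟨rfl, hv⟩)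
      · exact .single (bypass_eq_some.2 (.inl huy))
      · exact .single (bypass_eq_some.2 (.inr ⟨huy, hv⟩))
    | @tail y z _ hyz ih =>
      intro v hz
      cases y with
      | none => exact ih v (.inr ⟨rfl, by grind⟩)
      | some w => exact (ih w (.inl rfl)).tail (bypass_eq_some.2 (by grind))
  · refine Reaches.lift some fun a b hab => ?_
    rcases bypass_eq_some.1 hab with hab | ⟨ha, hb⟩
    · exact .single hab
    · exact .tail (.single ha) hb

lemma cycleCount_eq_bypass {h : Option V ≃. Option V} (hnone : h none ≠ some none) :
    cycleCount h = cycleCount (bypass h) := by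
  refine cycleCount_eq_of_reaches_iff (f := some) (fun _ _ => reaches_bypass_iff) fun x hx => ?_
  cases x with
  | some u => exact ⟨u, hx, hx⟩
  | none =>
    obtain ⟨y, hy, hy'⟩ := Relation.TransGen.head'_iff.1 hx
    obtain ⟨v, rfl⟩ : ∃ v, y = some v := Option.ne_none_iff_exists'.1 fun h => hnone (h ▸ hy)
    rcases Relation.reflTransGen_iff_eq_or_transGen.1 hy' with h | h
    · cases h
    · exact ⟨v, .single hy, h⟩

lemma cycleCount_eq_bypass_add_one [Finite V] {h : Option V ≃. Option V}
    (hnone : h none = some none) : cycleCount h = cycleCount (bypass h) + 1 := by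
  have reaches_none {y : Option V} : Reaches h none y ↔ y = none := by
    constructor
    · intro hy
      induction hy with
      | single hy => simpa [hnone, eq_comm] using hy
      | tail _ hyz ih => simpa [ih, hnone, eq_comm] using hyz
    · rintro rfl
      exact .single hnone
  have cycles_eq : cycles h = insert {none}
      ((fun u : V => {y | Reaches h (some u) y}) '' {u | Reaches (bypass h) u u}) := by
    ext s
    simp only [cycles, Set.mem_insert_iff, Set.mem_image, Option.exists, ← reaches_bypass_iff]
    simp [reaches_none, eq_comm]
  rw [cycleCount, cycles_eq, Set.ncard_insert_of_notMem,
    ncard_cycles_through fun _ _ => reaches_bypass_iff]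
  rintro ⟨u, hu, hs⟩
  have : some u ∈ ({none} : Set (Option V)) := hs ▸ reaches_bypass_iff.2 hu
  cases this

lemma cycleCount_eq_bypass_add_ite [Finite V] (h : Option V ≃. Option V) :
    cycleCount h = cycleCount (bypass h) + if h none = some none then 1 else 0 := by
  split_ifs with hnone
  · exact cycleCount_eq_bypass_add_one hnone
  · exact cycleCount_eq_bypass hnone

/-- `p` and `s` can serve as predecessor and successor of a new point `none` to be inserted in
`g`; `none` means that there is no predecessor or successor, and `some none` is the new point
itself. -/
structure IsInsertion (g : V ≃. V) (p s : Option (Option V)) : Prop where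
  fixed_iff : p = some none ↔ s = some none
  edge_iff : ∀ u v, g u = some v → (p = some (some u) ↔ s = some (some v))
  apply_eq : ∀ u v, p = some (some u) → s = some (some v) → g u = some v

lemma isInsertion_bypass (h : Option V ≃. Option V) :
    IsInsertion (bypass h) (h.symm none) (h none) where
  fixed_iff := PEquiv.eq_some_iff h
  edge_iff u v huv := by
    rw [PEquiv.eq_some_iff]
    rcases bypass_eq_some.1 huv with huv | ⟨hu, hv⟩
    · have := PEquiv.inj h (a₁ := none) (a₂ := some u) (b := some v)
      simp_all
    · simp [hu, hv]
  apply_eq u v hu hv := bypass_eq_some.2 (.inr ⟨(PEquiv.eq_some_iff h).1 hu, hv⟩)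

/-- The function `f` with a new point `none` inserted between `p` and `s`. -/
def insertFun (f : V → Option V) (p s : Option (Option V)) (x : Option V) : Option (Option V) :=
  x.elim s fun u => if p = some (some u) then some none else (f u).map some

lemma insertFun_some_eq_none {f : V → Option V} {p s : Option (Option V)} {u : V} :
    insertFun f p s (some u) = some none ↔ p = some (some u) := by
  simp [insertFun]

lemma insertFun_some_eq_some {f : V → Option V} {p s : Option (Option V)} {u v : V} :
    insertFun f p s (some u) = some (some v) ↔ p ≠ some (some u) ∧ f u = some v := by
  rw [insertFun, Option.elim_some]
  split_ifs with h <;> simp [h]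

/-- The partial permutation obtained from `g` by inserting a new point `none` with predecessor `p`
and successor `s`. -/
def insertNone (g : V ≃. V) (p s : Option (Option V)) (hps : IsInsertion g p s) :
    Option V ≃. Option V where
  toFun := insertFun g p s
  invFun := insertFun g.symm s p
  inv
    | none, none => hps.fixed_iff
    | some _, none => insertFun_some_eq_none.symm
    | none, some _ => insertFun_some_eq_none
    | some u, some v => by
      simp only [insertFun_some_eq_some, PEquiv.eq_some_iff, and_congr_left_iff]
      exact fun huv => (hps.edge_iff u v huv).not.symm

lemma bypass_insertNone {g : V ≃. V} {p s : Option (Option V)} (hps : IsInsertion g p s) :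
    bypass (insertNone g p s hps) = g := by
  ext u v
  have edge_iff := hps.edge_iff u v
  have apply_eq := hps.apply_eq u v
  change bypass _ u = some v ↔ g u = some v
  simp only [bypass_eq_some, insertNone, PEquiv.coe_mk]
  rw [insertFun_some_eq_some, insertFun_some_eq_none]
  change _ ∨ _ ∧ s = some (some v) ↔ _
  tauto

lemma insertNone_bypass (h : Option V ≃. Option V) :
    insertNone (bypass h) (h.symm none) (h none) (isInsertion_bypass h) = h := by
  ext x y
  change insertFun (bypass h) (h.symm none) (h none) x = some y ↔ h x = some y
  cases x with
  | none => rfl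
  | some u =>
    cases y with
    | none => rw [insertFun_some_eq_none, PEquiv.eq_some_iff]
    | some v =>
      rw [insertFun_some_eq_some, bypass_eq_some, Ne, PEquiv.eq_some_iff]
      refine ⟨fun ⟨hu, huv⟩ => huv.resolve_right fun h => hu h.1, fun huv => ?_⟩
      simp [huv]

/-- A partial permutation of `Option V` amounts to one of `V` together with the predecessor and
the successor of the point `none`. -/
def insertionEquiv : (Option V ≃. Option V) ≃
    {q : (V ≃. V) × Option (Option V) × Option (Option V) // IsInsertion q.1 q.2.1 q.2.2} where
  toFun h := ⟨(bypass h, h.symm none, h none), isInsertion_bypass h⟩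
  invFun q := insertNone q.1.1 q.1.2.1 q.1.2.2 q.2
  left_inv := insertNone_bypass
  right_inv q := Subtype.ext (Prod.ext (bypass_insertNone q.2) rfl)

lemma isInsertion_none_none (g : V ≃. V) : IsInsertion g none none where
  fixed_iff := by simp
  edge_iff := by simp
  apply_eq := by simp

lemma isInsertion_fixed_iff {g : V ≃. V} {s : Option (Option V)} :
    IsInsertion g (some none) s ↔ s = some none :=
  ⟨fun h => h.fixed_iff.1 rfl, fun h => by constructor <;> simp [h]⟩

lemma not_isInsertion_none_fixed {g : V ≃. V} : ¬ IsInsertion g none (some none) :=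
  fun h => by simpa using h.fixed_iff

lemma isInsertion_none_some_iff {g : V ≃. V} {v : V} :
    IsInsertion g none (some (some v)) ↔ g.symm v = none := by
  simp only [Option.eq_none_iff_forall_ne_some, Ne, PEquiv.eq_some_iff]
  refine ⟨fun h u huv => by simpa using h.edge_iff u v huv, fun h => ⟨by simp, ?_, by simp⟩⟩
  rintro u w huw
  have : v ≠ w := fun hvw => h u (hvw ▸ huw)
  simpa using this

lemma isInsertion_some_iff {g : V ≃. V} {u : V} {s : Option (Option V)} :
    IsInsertion g (some (some u)) s ↔ s = (g u).map some := by
  constructor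
  · intro h
    cases hu : g u with
    | some w => exact (h.edge_iff u w hu).1 rfl
    | none =>
      rcases s with _ | _ | v
      · rfl
      · simpa using h.fixed_iff
      · simpa [hu] using h.apply_eq u v rfl rfl
  · rintro rfl
    refine ⟨by simp, fun a v hav => ⟨?_, fun h => ?_⟩, fun a v hua h => ?_⟩
    · rintro ⟨⟩
      simp [hav]
    · have huv : g u = some v := by simpa using h
      exact congrArg (some ∘ some) (g.inj huv hav)
    · obtain rfl : u = a := by simpa using hua
      simpa using h

lemma sum_pequiv_option [Fintype V] {N : Type*} [AddCommMonoid N]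
    (F : (V ≃. V) → Option (Option V) → Option (Option V) → N) :
    ∑ h : Option V ≃. Option V, F (bypass h) (h.symm none) (h none) =
      ∑ g : V ≃. V, (F g none none + F g (some none) (some none) +
        ∑ u, F g (some (some u)) ((g u).map some) +
        ∑ v, if g.symm v = none then F g none (some (some v)) else 0) := by
  calc ∑ h : Option V ≃. Option V, F (bypass h) (h.symm none) (h none)
    _ = ∑ q : {q : (V ≃. V) × Option (Option V) × Option (Option V) //
          IsInsertion q.1 q.2.1 q.2.2}, F q.1.1 q.1.2.1 q.1.2.2 :=
      Fintype.sum_equiv insertionEquiv _ _ fun _ => rfl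
    _ = ∑ g : V ≃. V, ∑ p, ∑ s, if IsInsertion g p s then F g p s else 0 := by
      rw [← Finset.sum_subtype {q : (V ≃. V) × Option (Option V) × Option (Option V) |
        IsInsertion q.1 q.2.1 q.2.2} (by simp) fun q => F q.1 q.2.1 q.2.2, Finset.sum_filter]
      simp only [Fintype.sum_prod_type]
    _ = _ := Finset.sum_congr rfl fun g _ => by
      rw [Fintype.sum_option, Fintype.sum_option, Fintype.sum_option, Fintype.sum_option]
      simp only [isInsertion_none_none, not_isInsertion_none_fixed, isInsertion_none_some_iff,
        isInsertion_fixed_iff, isInsertion_some_iff, Finset.sum_ite_eq', Finset.mem_univ, if_true,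
        if_false]
      abel

end PointDeletion

section InsertionWeight

variable {V R : Type*} [Fintype V] [CommRing R]

/-- The derivative of `weight θ φ M g` in the direction `θ'`, `φ'`, `M'`. -/
def weightDeriv (θ φ θ' φ' : V → R) (M M' : Matrix V V R) (g : V ≃. V) : R :=
  (∑ u, (∏ x ∈ Finset.univ.erase u, (g x).elim (φ x) (M x)) * (g u).elim (φ' u) (M' u)) *
      ∏ j, (g.symm j).elim (θ j) (fun _ => 1) +
    (∏ x, (g x).elim (φ x) (M x)) *
      ∑ v, (∏ j ∈ Finset.univ.erase v, (g.symm j).elim (θ j) fun _ => 1) *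
        (g.symm v).elim (θ' v) fun _ => 0

lemma weightDeriv_sum {κ : Type*} (s : Finset κ) (θ φ : V → R) (θ' φ' : κ → V → R)
    (M : Matrix V V R) (M' : κ → Matrix V V R) (g : V ≃. V) :
    ∑ c ∈ s, weightDeriv θ φ (θ' c) (φ' c) M (M' c) g =
      weightDeriv θ φ (∑ c ∈ s, θ' c) (∑ c ∈ s, φ' c) M (∑ c ∈ s, M' c) g := by
  have elim_sum (o : Option V) (a : κ → R) (b : κ → V → R) :
      ∑ c ∈ s, o.elim (a c) (b c) = o.elim (∑ c ∈ s, a c) fun v => ∑ c ∈ s, b c v := by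
    cases o <;> rfl
  have row_sum (u : V) : (∑ c ∈ s, M' c) u = fun v => ∑ c ∈ s, M' c u v :=
    funext fun v => Matrix.sum_apply u v s M'
  simp only [weightDeriv, Finset.sum_add_distrib, ← Finset.sum_mul, ← Finset.mul_sum]
  rw [Finset.sum_comm, Finset.sum_comm (s := s)]
  simp only [← Finset.mul_sum, elim_sum, Finset.sum_apply, row_sum, Finset.sum_const_zero]

/-- The weight of the partial permutation obtained from `g` by inserting `none` between `p` and
`s`. -/
def insertionWeight (θ φ : Option V → R) (M : Matrix (Option V) (Option V) R) (g : V ≃. V)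
    (p s : Option (Option V)) : R :=
  p.elim (θ none) (fun _ => 1) * s.elim (φ none) (M none) *
    (∏ u, if p = some (some u) then M (some u) none
      else (g u).elim (φ (some u)) (M.submatrix some some u)) *
    ∏ v, if s = some (some v) then 1 else (g.symm v).elim (θ (some v)) fun _ => 1

lemma weight_eq_insertionWeight (θ φ : Option V → R) (M : Matrix (Option V) (Option V) R)
    (h : Option V ≃. Option V) :
    weight θ φ M h = insertionWeight θ φ M (bypass h) (h.symm none) (h none) := by
  have dom_factor (u : V) : (h (some u)).elim (φ (some u)) (M (some u)) =
      if h.symm none = some (some u) then M (some u) none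
      else (bypass h u).elim (φ (some u)) (M.submatrix some some u) := by
    have pred_iff : h.symm none = some (some u) ↔ h (some u) = some none := PEquiv.eq_some_iff h
    have bypass_apply : bypass h u = skipNone h u := rfl
    rcases hu : h (some u) with _ | _ | v <;> simp [pred_iff, bypass_apply, skipNone, hu]
  have im_factor (v : V) : (h.symm (some v)).elim (θ (some v)) (fun _ => 1) =
      if h none = some (some v) then 1
      else ((bypass h).symm v).elim (θ (some v)) fun _ => 1 := by
    have succ_iff : h none = some (some v) ↔ h.symm (some v) = some none :=
      (PEquiv.eq_some_iff h).symm
    have bypass_symm_apply : (bypass h).symm v = skipNone h.symm v := rfl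
    rcases hv : h.symm (some v) with _ | _ | u <;>
      simp [succ_iff, bypass_symm_apply, skipNone, hv]
  simp only [weight, insertionWeight, Fintype.prod_option, dom_factor, im_factor]
  ring

variable (θ φ : Option V → R) (M : Matrix (Option V) (Option V) R) (g : V ≃. V)

lemma insertionWeight_none_none : insertionWeight θ φ M g none none =
    θ none * φ none * weight (θ ∘ some) (φ ∘ some) (M.submatrix some some) g := by
  simp [insertionWeight, weight, mul_assoc]

lemma insertionWeight_fixed : insertionWeight θ φ M g (some none) (some none) =
    M none none * weight (θ ∘ some) (φ ∘ some) (M.submatrix some some) g := by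
  simp [insertionWeight, weight, mul_assoc]

lemma insertionWeight_some (u : V) :
    insertionWeight θ φ M g (some (some u)) ((g u).map some) =
      (∏ x ∈ Finset.univ.erase u, (g x).elim (φ (some x)) (M.submatrix some some x)) *
        (g u).elim (M (some u) none * φ none) (fun v => M (some u) none * M none (some v)) *
        ∏ j, (g.symm j).elim (θ (some j)) fun _ => 1 := by
  have im_factor (v : V) : (if (g u).map some = some (some v) then 1
      else (g.symm v).elim (θ (some v)) fun _ => 1) =
        (g.symm v).elim (θ (some v)) fun _ => 1 := by
    split_ifs with h
    · have hv : g.symm v = some u := (PEquiv.eq_some_iff g).2 (by simpa using h)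
      simp [hv]
    · rfl
  have dom_factor (x : V) (hx : x ∈ Finset.univ.erase u) :
      (if some (some u) = some (some x) then M (some x) none
        else (g x).elim (φ (some x)) (M.submatrix some some x)) =
      (g x).elim (φ (some x)) (M.submatrix some some x) :=
    if_neg (by simpa [eq_comm] using hx)
  simp only [insertionWeight, im_factor]
  rw [← Finset.mul_prod_erase _ _ (Finset.mem_univ u), Finset.prod_congr rfl dom_factor]
  cases g u <;> simp <;> ring

lemma insertionWeight_none_some (v : V) :
    insertionWeight θ φ M g none (some (some v)) =
      (∏ x, (g x).elim (φ (some x)) (M.submatrix some some x)) *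
        ((∏ j ∈ Finset.univ.erase v, (g.symm j).elim (θ (some j)) fun _ => 1) *
          (θ none * M none (some v))) := by
  have im_prod : (∏ j, if some (some v) = some (some j) then 1
      else (g.symm j).elim (θ (some j)) fun _ => 1) =
        ∏ j ∈ Finset.univ.erase v, (g.symm j).elim (θ (some j)) fun _ => 1 := by
    rw [← Finset.mul_prod_erase _ _ (Finset.mem_univ v), if_pos rfl, one_mul]
    exact Finset.prod_congr rfl fun j hj => if_neg (by simpa [eq_comm] using hj)
  rw [insertionWeight, im_prod]
  simp
  ring

lemma sum_weight_option (β : R) : ∑ h : Option V ≃. Option V, β ^ cycleCount h * weight θ φ M h =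
    ∑ g : V ≃. V, β ^ cycleCount g *
      ((β * M none none + θ none * φ none) *
          weight (θ ∘ some) (φ ∘ some) (M.submatrix some some) g +
        weightDeriv (θ ∘ some) (φ ∘ some) (fun v => θ none * M none (some v))
          (fun u => M (some u) none * φ none) (M.submatrix some some)
          (vecMulVec (fun u => M (some u) none) fun v => M none (some v)) g) := by
  simp only [weight_eq_insertionWeight, cycleCount_eq_bypass_add_ite]
  rw [sum_pequiv_option fun g p s =>
    β ^ (cycleCount g + if s = some none then 1 else 0) * insertionWeight θ φ M g p s]
  refine Finset.sum_congr rfl fun g _ => ?_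
  have append (u : V) : (g u).map some ≠ some none := by cases g u <;> simp
  have prepend (v : V) : (if g.symm v = none then
      β ^ (cycleCount g + if some (some v) = some none then 1 else 0) *
        insertionWeight θ φ M g none (some (some v)) else 0) =
      β ^ cycleCount g * ((∏ x, (g x).elim (φ (some x)) (M.submatrix some some x)) *
        ((∏ j ∈ Finset.univ.erase v, (g.symm j).elim (θ (some j)) fun _ => 1) *
          (g.symm v).elim (θ none * M none (some v)) fun _ => 0)) := by
    by_cases hv : g.symm v = none
    · simp [insertionWeight_none_some, hv]
    · obtain ⟨u, hu⟩ := Option.ne_none_iff_exists'.1 hv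
      simp [hu]
  have vecMulVec_row (u : V) : vecMulVec (fun u => M (some u) none) (fun v => M none (some v)) u =
      fun v => M (some u) none * M none (some v) := rfl
  simp only [prepend, append, insertionWeight_none_none, insertionWeight_fixed,
    insertionWeight_some, weightDeriv, vecMulVec_row, if_true, if_false, Function.comp_apply,
    ← Finset.mul_sum, ← Finset.sum_mul]
  simp only [reduceCtorEq, if_false]
  ring

end InsertionWeight

section ColorSum

variable {V W ι R : Type*} [Fintype V] [Fintype ι] [CommRing R]

/-- The sum of the extended partial permanents of all matrices obtained from `A`, `θ`, `φ` by
colouring the index set `V` with indices of `A`. -/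
def colorSum (V : Type*) [Fintype V] [DecidableEq V] (β : R) (θ φ : ι → R) (A : Matrix ι ι R) : R :=
  ∑ f : V → ι, ppermB β (θ ∘ f) (φ ∘ f) (A.submatrix f f)

/-- The derivative of `colorSum V β θ φ A` in the direction `θ'`, `φ'`, `A'`. -/
def colorSumDeriv (V : Type*) [Fintype V] [DecidableEq V] (β : R) (θ φ θ' φ' : ι → R)
    (A A' : Matrix ι ι R) : R :=
  ∑ f : V → ι, ∑ g : V ≃. V, β ^ cycleCount g *
    weightDeriv (θ ∘ f) (φ ∘ f) (θ' ∘ f) (φ' ∘ f) (A.submatrix f f) (A'.submatrix f f) g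

variable (β : R) (θ φ : ι → R) (A : Matrix ι ι R)

lemma colorSum_eq_sum_weight [DecidableEq V] : colorSum V β θ φ A =
    ∑ f : V → ι, ∑ g : V ≃. V, β ^ cycleCount g *
      weight (θ ∘ f) (φ ∘ f) (A.submatrix f f) g := by
  simp only [colorSum, ppermB_eq_sum_pequiv]

lemma colorSum_congr [DecidableEq V] [Fintype W] [DecidableEq W] (e : V ≃ W) :
    colorSum V β θ φ A = colorSum W β θ φ A :=
  Fintype.sum_equiv (e.arrowCongr (.refl ι)) _ _ fun f => by
    rw [← ppermB_submatrix_equiv e]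
    congr! 1 <;> ext <;> simp

lemma colorSum_of_isEmpty [IsEmpty V] [DecidableEq V] : colorSum V β θ φ A = 1 := by
  have pequiv_unique (g : V ≃. V) : g = ⊥ := PEquiv.ext isEmptyElim
  have : cycles (⊥ : V ≃. V) = ∅ := by simp [cycles, Set.eq_empty_of_isEmpty]
  simp [colorSum_eq_sum_weight, weight, cycleCount, this,
    Fintype.sum_eq_single (⊥ : V ≃. V) fun g hg => (hg (pequiv_unique g)).elim]

lemma colorSum_option [DecidableEq V] : colorSum (Option V) β θ φ A =
    (β * A.trace + θ ⬝ᵥ φ) * colorSum V β θ φ A +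
      colorSumDeriv V β θ φ (θ ᵥ* A) (A *ᵥ φ) A (A * A) := by
  have sum_colorings (F : (Option V → ι) → R) :
      ∑ f : Option V → ι, F f = ∑ f : V → ι, ∑ c : ι, F fun o => o.elim c f := by
    rw [Finset.sum_comm, ← Fintype.sum_prod_type']
    exact Fintype.sum_equiv Equiv.piOptionEquivProd _ _ fun f => congrArg F <| funext fun o => by
      cases o <;> rfl
  have prefactor : β * A.trace + θ ⬝ᵥ φ = ∑ c, (β * A c c + θ c * φ c) := by
    rw [Finset.sum_add_distrib, ← Finset.mul_sum]
    rfl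
  have vecMul_comp (f : V → ι) : (θ ᵥ* A) ∘ f = ∑ c, fun v => θ c * A c (f v) := by
    ext v
    simp [vecMul, dotProduct]
  have mulVec_comp (f : V → ι) : (A *ᵥ φ) ∘ f = ∑ c, fun v => A (f v) c * φ c := by
    ext v
    simp [mulVec, dotProduct]
  have submatrix_mul (f : V → ι) : (A * A).submatrix f f =
      ∑ c, vecMulVec (fun u => A (f u) c) fun v => A c (f v) := by
    ext u v
    simp [Matrix.mul_apply, Matrix.sum_apply, vecMulVec_apply]
  have insert_color (f : V → ι) (c : ι) :
      ∑ h : Option V ≃. Option V, β ^ cycleCount h * weight (θ ∘ fun o => o.elim c f)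
        (φ ∘ fun o => o.elim c f) (A.submatrix (fun o => o.elim c f) fun o => o.elim c f) h =
      ∑ g : V ≃. V, β ^ cycleCount g *
        ((β * A c c + θ c * φ c) * weight (θ ∘ f) (φ ∘ f) (A.submatrix f f) g +
          weightDeriv (θ ∘ f) (φ ∘ f) (fun v => θ c * A c (f v)) (fun u => A (f u) c * φ c)
            (A.submatrix f f) (vecMulVec (fun u => A (f u) c) fun v => A c (f v)) g) :=
    sum_weight_option ..
  rw [colorSum_eq_sum_weight, colorSum_eq_sum_weight, sum_colorings, colorSumDeriv,
    Finset.mul_sum, ← Finset.sum_add_distrib]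
  refine Finset.sum_congr rfl fun f _ => ?_
  simp only [insert_color]
  rw [Finset.sum_comm, Finset.mul_sum, ← Finset.sum_add_distrib]
  refine Finset.sum_congr rfl fun g _ => ?_
  rw [← Finset.mul_sum, Finset.sum_add_distrib, ← Finset.sum_mul, ← prefactor, weightDeriv_sum,
    ← vecMul_comp, ← mulVec_comp, ← submatrix_mul]
  ring

end ColorSum

section Derivatives

attribute [local instance] Matrix.linftyOpNormedRing Matrix.linftyOpNormedAlgebra

variable {V ι 𝕜 : Type*} [Fintype V] [Fintype ι] [NontriviallyNormedField 𝕜]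

lemma hasDerivAt_weight {θ φ : 𝕜 → V → 𝕜} {M : 𝕜 → Matrix V V 𝕜} {θ' φ' : V → 𝕜}
    {M' : Matrix V V 𝕜} {t : 𝕜} (hθ : HasDerivAt θ θ' t) (hφ : HasDerivAt φ φ' t)
    (hM : HasDerivAt M M' t) (g : V ≃. V) :
    HasDerivAt (fun s => weight (θ s) (φ s) (M s) g)
      (weightDeriv (θ t) (φ t) θ' φ' (M t) M' g) t := by
  have dom_factor (x : V) : HasDerivAt (fun s => (g x).elim (φ s x) (M s x))
      ((g x).elim (φ' x) (M' x)) t := by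
    cases g x with
    | none => exact hasDerivAt_pi.1 hφ x
    | some y => exact hasDerivAt_pi.1 (hasDerivAt_pi.1 hM x) y
  have im_factor (y : V) : HasDerivAt (fun s => (g.symm y).elim (θ s y) fun _ => 1)
      ((g.symm y).elim (θ' y) fun _ => 0) t := by
    cases g.symm y with
    | none => exact hasDerivAt_pi.1 hθ y
    | some x => exact hasDerivAt_const t 1
  exact (HasDerivAt.fun_finsetProd fun x _ => dom_factor x).mul
    (HasDerivAt.fun_finsetProd fun y _ => im_factor y)

lemma hasDerivAt_colorSum [DecidableEq V] (β : 𝕜) {θ φ : 𝕜 → ι → 𝕜} {A : 𝕜 → Matrix ι ι 𝕜}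
    {θ' φ' : ι → 𝕜} {A' : Matrix ι ι 𝕜} {t : 𝕜} (hθ : HasDerivAt θ θ' t)
    (hφ : HasDerivAt φ φ' t) (hA : HasDerivAt A A' t) :
    HasDerivAt (fun s => colorSum V β (θ s) (φ s) (A s))
      (colorSumDeriv V β (θ t) (φ t) θ' φ' (A t) A') t := by
  simp only [colorSum_eq_sum_weight]
  refine HasDerivAt.fun_sum fun f _ => HasDerivAt.fun_sum fun g _ => .const_mul _ ?_
  refine hasDerivAt_weight (θ := fun s => θ s ∘ f) (φ := fun s => φ s ∘ f)
    (M := fun s => (A s).submatrix f f) ?_ ?_ ?_ g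
  · exact hasDerivAt_pi.2 fun v => hasDerivAt_pi.1 hθ (f v)
  · exact hasDerivAt_pi.2 fun v => hasDerivAt_pi.1 hφ (f v)
  · exact hasDerivAt_pi.2 fun u => hasDerivAt_pi.2 fun v =>
      hasDerivAt_pi.1 (hasDerivAt_pi.1 hA (f u)) (f v)

lemma hasDerivAt_vecMul (θ : ι → 𝕜) {A : 𝕜 → Matrix ι ι 𝕜} {A' : Matrix ι ι 𝕜} {t : 𝕜}
    (hA : HasDerivAt A A' t) : HasDerivAt (fun s => θ ᵥ* A s) (θ ᵥ* A') t :=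
  hasDerivAt_pi.2 fun j => HasDerivAt.fun_sum fun i _ =>
    (hasDerivAt_pi.1 (hasDerivAt_pi.1 hA i) j).const_mul (θ i)

lemma hasDerivAt_mulVec (φ : ι → 𝕜) {A : 𝕜 → Matrix ι ι 𝕜} {A' : Matrix ι ι 𝕜} {t : 𝕜}
    (hA : HasDerivAt A A' t) : HasDerivAt (fun s => A s *ᵥ φ) (A' *ᵥ φ) t :=
  hasDerivAt_pi.2 fun i => HasDerivAt.fun_sum fun j _ =>
    (hasDerivAt_pi.1 (hasDerivAt_pi.1 hA i) j).mul_const (φ j)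

variable [DecidableEq ι]

/-- The matrix `(1 - t A)⁻¹`, equal to `∑ k, t ^ k • A ^ k` for small `t`. -/
def neumannInv (A : Matrix ι ι 𝕜) (t : 𝕜) : Matrix ι ι 𝕜 := (1 - t • A)⁻¹

variable {A : Matrix ι ι 𝕜} {t : 𝕜}

lemma neumannInv_mul_cancel (h : (1 - t • A).det ≠ 0) : neumannInv A t * (1 - t • A) = 1 :=
  nonsing_inv_mul _ h.isUnit

lemma mul_neumannInv_cancel (h : (1 - t • A).det ≠ 0) : (1 - t • A) * neumannInv A t = 1 :=
  mul_nonsing_inv _ h.isUnit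

lemma neumannInv_mul_comm (h : (1 - t • A).det ≠ 0) :
    neumannInv A t * A = A * neumannInv A t := by
  have hcomm : Commute A (1 - t • A) :=
    (Commute.one_right A).sub_right ((Commute.refl A).smul_right t)
  calc neumannInv A t * A = neumannInv A t * (A * (1 - t • A)) * neumannInv A t := by
        rw [mul_assoc, mul_assoc, mul_neumannInv_cancel h, mul_one]
    _ = A * neumannInv A t := by
        rw [hcomm.eq, ← mul_assoc, neumannInv_mul_cancel h, one_mul]

lemma neumannInv_mul_self (h : (1 - t • A).det ≠ 0) : neumannInv A t * neumannInv A t =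
    neumannInv A t + t • (neumannInv A t * A * neumannInv A t) := by
  calc neumannInv A t * neumannInv A t =
        neumannInv A t * (1 - t • A) * neumannInv A t +
          t • (neumannInv A t * A * neumannInv A t) := by
        simp only [mul_sub, sub_mul, mul_one, mul_smul_comm, smul_mul_assoc, sub_add_cancel]
    _ = _ := by rw [neumannInv_mul_cancel h, one_mul]

lemma hasDerivAt_neumannInv [CompleteSpace 𝕜] (h : (1 - t • A).det ≠ 0) :
    HasDerivAt (neumannInv A) (neumannInv A t * A * neumannInv A t) t := by
  obtain ⟨u, hu⟩ := (isUnit_iff_isUnit_det (1 - t • A)).2 h.isUnit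
  have inv_eq : neumannInv A t = (u⁻¹ : (Matrix ι ι 𝕜)ˣ) := by
    rw [neumannInv, ← hu, coe_units_inv]
  have hline : HasDerivAt (fun s : 𝕜 => 1 - s • A) (-A) t :=
    (((hasDerivAt_id t).smul_const A).const_sub 1).congr_deriv (by simp)
  have : HasSummableGeomSeries (Matrix ι ι 𝕜) :=
    @instHasSummableGeomSeriesOfCompleteSpace _ _ (inferInstanceAs (CompleteSpace (ι → ι → 𝕜)))
  have eq_comp : neumannInv A = Ring.inverse ∘ fun s => 1 - s • A :=
    funext fun s => nonsing_inv_eq_ringInverse _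
  have hinv := hasFDerivAt_ringInverse (𝕜 := 𝕜) u
  rw [hu] at hinv
  rw [inv_eq, eq_comp]
  exact (hinv.comp_hasDerivAt t hline).congr_deriv (by simp)

lemma hasDerivAt_det_one_add_smul (M : Matrix ι ι 𝕜) :
    HasDerivAt (fun s : 𝕜 => (1 + s • M).det) M.trace 0 := by
  rw [← derivative_det_one_add_X_smul]
  refine (Polynomial.hasDerivAt _ 0).congr_of_eventuallyEq (.of_forall fun s => ?_)
  simp [eval_det, ← smul_eq_mul_diagonal]

lemma hasDerivAt_det_one_sub_smul (h : (1 - t • A).det ≠ 0) :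
    HasDerivAt (fun s : 𝕜 => (1 - s • A).det)
      (-((1 - t • A).det * (A * neumannInv A t).trace)) t := by
  have det_eq (s : 𝕜) : (1 - s • A).det =
      (1 - t • A).det * (1 + (s - t) • -(A * neumannInv A t)).det := by
    rw [← det_mul, ← neumannInv_mul_comm h, mul_add, mul_smul_comm, mul_neg, ← mul_assoc,
      mul_neumannInv_cancel h, mul_one, one_mul, sub_smul]
    congr 1
    simp only [smul_neg]
    abel
  have hdet := hasDerivAt_det_one_add_smul (-(A * neumannInv A t))
  rw [← sub_self t] at hdet
  have := ((hdet.comp_sub_const t t).const_mul (1 - t • A).det)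
  simp only [← det_eq] at this
  exact this.congr_deriv (by simp)

end Derivatives

section GeneratingFunction

open Complex Metric

attribute [local instance] Matrix.linftyOpNormedRing Matrix.linftyOpNormedAlgebra

variable {ι : Type*} [Fintype ι] [DecidableEq ι] (β : ℂ) (θ φ : ι → ℂ) {A : Matrix ι ι ℂ}

/-- The generating function `exp (t θ (1 - t A)⁻¹ φ) / det (1 - t A) ^ β` of the sums of extended
partial permanents over all colourings of `Fin m`. The power of `t` counts the points of `Fin m`,
as each of them contributes an entry either of `θ` or of `A`. -/
def mmtGenFun (β : ℂ) (θ φ : ι → ℂ) (A : Matrix ι ι ℂ) (t : ℂ) : ℂ :=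
  exp (t * (θ ⬝ᵥ neumannInv A t *ᵥ φ)) / (1 - t • A).det ^ β

lemma mmtGenFun_eq_exp {t : ℂ} (h : (1 - t • A).det ≠ 0) : mmtGenFun β θ φ A t =
    exp (t * (θ ⬝ᵥ neumannInv A t *ᵥ φ) - log (1 - t • A).det * β) := by
  rw [mmtGenFun, cpow_def_of_ne_zero h, exp_sub]

lemma hasDerivAt_mmtGenFun {t : ℂ} (h : (1 - t • A).det ∈ slitPlane) :
    HasDerivAt (mmtGenFun β θ φ A)
      ((β * (A * neumannInv A t).trace + (θ ᵥ* neumannInv A t) ⬝ᵥ (neumannInv A t *ᵥ φ)) *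
        mmtGenFun β θ φ A t) t := by
  have hdet := slitPlane_ne_zero h
  have hlog := ((hasDerivAt_det_one_sub_smul hdet).clog h).mul_const β
  have hdot : HasDerivAt (fun s => θ ⬝ᵥ neumannInv A s *ᵥ φ)
      (θ ⬝ᵥ (neumannInv A t * A * neumannInv A t) *ᵥ φ) t :=
    HasDerivAt.fun_sum fun i _ =>
      (hasDerivAt_pi.1 (hasDerivAt_mulVec φ (hasDerivAt_neumannInv hdet)) i).const_mul (θ i)
  have eventually_eq : mmtGenFun β θ φ A =ᶠ[nhds t] fun s =>
      exp (s * (θ ⬝ᵥ neumannInv A s *ᵥ φ) - log (1 - s • A).det * β) :=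
    ((hasDerivAt_det_one_sub_smul hdet).continuousAt.eventually_ne hdet).mono
      fun s => mmtGenFun_eq_exp β θ φ
  have dot_eq : (θ ᵥ* neumannInv A t) ⬝ᵥ (neumannInv A t *ᵥ φ) = θ ⬝ᵥ neumannInv A t *ᵥ φ +
      t * (θ ⬝ᵥ (neumannInv A t * A * neumannInv A t) *ᵥ φ) := by
    rw [← dotProduct_mulVec, mulVec_mulVec, neumannInv_mul_self hdet, add_mulVec, dotProduct_add,
      smul_mulVec, dotProduct_smul, smul_eq_mul]
  refine ((((hasDerivAt_id t).mul hdot).sub hlog).cexp.congr_of_eventuallyEq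
    eventually_eq).congr_deriv ?_
  rw [mmtGenFun_eq_exp β θ φ hdet, dot_eq, neg_div, mul_div_cancel_left₀ _ hdet]
  simp only [id, Pi.mul_apply, Pi.sub_apply]
  ring

lemma hasDerivAt_colorSum_mul_mmtGenFun (m : ℕ) {t : ℂ} (h : (1 - t • A).det ∈ slitPlane) :
    HasDerivAt (fun s => colorSum (Fin m) β (θ ᵥ* neumannInv A s) (neumannInv A s *ᵥ φ)
        (A * neumannInv A s) * mmtGenFun β θ φ A s)
      (colorSum (Fin (m + 1)) β (θ ᵥ* neumannInv A t) (neumannInv A t *ᵥ φ)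
        (A * neumannInv A t) * mmtGenFun β θ φ A t) t := by
  have hdet := slitPlane_ne_zero h
  have hN := hasDerivAt_neumannInv hdet
  have hcolor := hasDerivAt_colorSum (V := Fin m) β (hasDerivAt_vecMul θ hN)
    (hasDerivAt_mulVec φ hN) (hN.const_mul A)
  refine (hcolor.mul (hasDerivAt_mmtGenFun β θ φ h)).congr_deriv ?_
  have deriv_θ : θ ᵥ* (neumannInv A t * A * neumannInv A t) =
      (θ ᵥ* neumannInv A t) ᵥ* (A * neumannInv A t) := by
    rw [vecMul_vecMul, mul_assoc]
  have deriv_φ : (neumannInv A t * A * neumannInv A t) *ᵥ φ =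
      (A * neumannInv A t) *ᵥ (neumannInv A t *ᵥ φ) := by
    rw [mulVec_mulVec, neumannInv_mul_comm hdet]
  have deriv_A : A * (neumannInv A t * A * neumannInv A t) =
      (A * neumannInv A t) * (A * neumannInv A t) := by
    simp only [mul_assoc]
  rw [colorSum_congr _ _ _ _ (finSuccEquiv m), colorSum_option, deriv_θ, deriv_φ, deriv_A]
  ring

lemma iteratedDeriv_mmtGenFun {s : Set ℂ} (hs : IsOpen s)
    (h : ∀ t ∈ s, (1 - t • A).det ∈ slitPlane) (m : ℕ) {t : ℂ} (ht : t ∈ s) :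
    iteratedDeriv m (mmtGenFun β θ φ A) t =
      colorSum (Fin m) β (θ ᵥ* neumannInv A t) (neumannInv A t *ᵥ φ) (A * neumannInv A t) *
        mmtGenFun β θ φ A t := by
  induction m generalizing t with
  | zero => simp [colorSum_of_isEmpty]
  | succ m ih =>
    rw [iteratedDeriv_succ, (Filter.eventuallyEq_of_mem (hs.mem_nhds ht) fun _ => ih).deriv_eq]
    exact (hasDerivAt_colorSum_mul_mmtGenFun β θ φ m (h t ht)).deriv

lemma hasSum_colorSum {R : ℝ} (hR : 1 < R)
    (h : ∀ t ∈ ball (0 : ℂ) R, (1 - t • A).det ∈ slitPlane) :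
    HasSum (fun m : ℕ => (m.factorial : ℂ)⁻¹ * colorSum (Fin m) β θ φ A)
      (exp (θ ⬝ᵥ (1 - A)⁻¹ *ᵥ φ) / (1 - A).det ^ β) := by
  have differentiable : DifferentiableOn ℂ (mmtGenFun β θ φ A) (ball 0 R) := fun t ht =>
    (hasDerivAt_mmtGenFun β θ φ (h t ht)).differentiableAt.differentiableWithinAt
  have one_mem : (1 : ℂ) ∈ ball (0 : ℂ) R := by simpa
  have zero_mem : (0 : ℂ) ∈ ball (0 : ℂ) R := mem_ball_self (zero_lt_one.trans hR)
  have iteratedDeriv_zero (m : ℕ) :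
      iteratedDeriv m (mmtGenFun β θ φ A) 0 = colorSum (Fin m) β θ φ A := by
    rw [iteratedDeriv_mmtGenFun β θ φ isOpen_ball h m zero_mem]
    simp [mmtGenFun, neumannInv]
  simpa [iteratedDeriv_zero, mmtGenFun, neumannInv] using
    hasSum_taylorSeries_on_ball differentiable one_mem

end GeneratingFunction

section ColorCount

variable {V W ι : Type*} [Fintype V] [Fintype W] [DecidableEq ι]

/-- The number of elements of `V` that the colouring `f` sends to each colour. -/
def colorCount (f : V → ι) (i : ι) : ℕ := Fintype.card {v // f v = i}

lemma colorCount_sigma_fst [Fintype ι] (r : ι → ℕ) :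
    colorCount (Sigma.fst : (Σ i, Fin (r i)) → ι) = r :=
  funext fun i => by rw [colorCount, Fintype.card_congr (Equiv.sigmaSubtype i), Fintype.card_fin]

lemma sum_colorCount [Fintype ι] (f : V → ι) : ∑ i, colorCount f i = Fintype.card V := by
  rw [← Fintype.card_congr (Equiv.sigmaFiberEquiv f), Fintype.card_sigma]
  rfl

lemma exists_comp_equiv_eq {f : V → ι} {g : W → ι} (h : colorCount f = colorCount g) :
    ∃ e : V ≃ W, g ∘ e = f :=
  ⟨.ofFiberEquiv fun i => Fintype.equivOfCardEq (congrFun h i), funext (Equiv.ofFiberEquiv_map _)⟩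

lemma colorCount_comp_equiv (g : W → ι) (e : V ≃ W) : colorCount (g ∘ e) = colorCount g :=
  funext fun _ => Fintype.card_congr (e.subtypeEquiv fun _ => Iff.rfl)

lemma card_equiv_comp_eq [Fintype ι] [DecidableEq V] [DecidableEq W] {f : V → ι} {g : W → ι}
    (h : colorCount f = colorCount g) :
    Fintype.card {e : V ≃ W // g ∘ e = f} = ∏ i, (colorCount f i).factorial := by
  obtain ⟨e₀, rfl⟩ := exists_comp_equiv_eq h
  refine .trans (Fintype.card_congr ?_) (DomMulAct.stabilizer_card (g ∘ e₀))
  refine ((Equiv.refl V).equivCongr e₀.symm).subtypeEquiv fun e => ?_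
  simp [funext_iff]

-- Both sides count the bijections `V ≃ Σ i, Fin (r i)`, the left one by the colouring they induce.
lemma card_colorCount_eq_mul_prod_factorial [Fintype ι] [DecidableEq V] {r : ι → ℕ}
    (hr : ∑ i, r i = Fintype.card V) :
    Fintype.card {f : V → ι // colorCount f = r} * ∏ i, (r i).factorial =
      (Fintype.card V).factorial := by
  have e₀ : V ≃ Σ i, Fin (r i) := Fintype.equivOfCardEq (by simp [hr])
  let coloring (e : V ≃ Σ i, Fin (r i)) : {f : V → ι // colorCount f = r} :=
    ⟨Sigma.fst ∘ e, by rw [colorCount_comp_equiv, colorCount_sigma_fst]⟩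
  have card_fiber (f : {f : V → ι // colorCount f = r}) :
      Fintype.card {e // coloring e = f} = ∏ i, (r i).factorial := by
    have card_eq := card_equiv_comp_eq (f.2.trans (colorCount_sigma_fst r).symm)
    rw [f.2] at card_eq
    exact (Fintype.card_congr (Equiv.subtypeEquivRight fun e => Subtype.ext_iff)).trans card_eq
  rw [← Fintype.card_equiv e₀, ← Fintype.card_congr (Equiv.sigmaFiberEquiv coloring),
    Fintype.card_sigma]
  simp [card_fiber]

lemma ppermB_submatrix_eq_of_colorCount_eq [DecidableEq V] [DecidableEq W] {R : Type*}
    [CommRing R] (β : R) (θ φ : ι → R) (A : Matrix ι ι R) {f : V → ι} {g : W → ι}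
    (h : colorCount f = colorCount g) :
    ppermB β (θ ∘ f) (φ ∘ f) (A.submatrix f f) = ppermB β (θ ∘ g) (φ ∘ g) (A.submatrix g g) := by
  obtain ⟨e, rfl⟩ := exists_comp_equiv_eq h
  exact ppermB_submatrix_equiv e β (θ ∘ g) (φ ∘ g) (A.submatrix g g)

end ColorCount

section MMTTerm

variable {V ι K : Type*} [Fintype V] [Fintype ι] [DecidableEq ι] [Field K]

/-- The summand `(1 / r!) pperm_{β,θ,φ} A(n^r, n^r)` of the Partial Permutation MacMahon Master
Theorem. -/
def mmtTerm (β : K) (θ φ : ι → K) (A : Matrix ι ι K) (r : ι → ℕ) : K :=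
  ((∏ i, (r i).factorial : ℕ) : K)⁻¹ * ppermB β (fun k : Σ i, Fin (r i) => θ k.1)
    (fun k => φ k.1) (A.submatrix Sigma.fst Sigma.fst)

variable (β : K) (θ φ : ι → K) (A : Matrix ι ι K)

variable [CharZero K]

lemma mmtTerm_eq_sum_colorings [DecidableEq V] {r : ι → ℕ} (hr : ∑ i, r i = Fintype.card V) :
    mmtTerm β θ φ A r = ((Fintype.card V).factorial : K)⁻¹ *
      ∑ f : V → ι with colorCount f = r, ppermB β (θ ∘ f) (φ ∘ f) (A.submatrix f f) := by
  have ppermB_eq : ∀ f ∈ Finset.univ.filter fun f : V → ι => colorCount f = r,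
      ppermB β (θ ∘ f) (φ ∘ f) (A.submatrix f f) =
        ppermB β (θ ∘ Sigma.fst) (φ ∘ Sigma.fst)
          (A.submatrix (Sigma.fst : (Σ i, Fin (r i)) → ι) Sigma.fst) := fun f hf =>
    ppermB_submatrix_eq_of_colorCount_eq β θ φ A
      ((Finset.mem_filter.1 hf).2.trans (colorCount_sigma_fst r).symm)
  have card_mul := card_colorCount_eq_mul_prod_factorial hr
  have card_ne_zero := left_ne_zero_of_mul (card_mul.trans_ne (Nat.factorial_ne_zero _))
  rw [Finset.sum_congr rfl ppermB_eq, Finset.sum_const, nsmul_eq_mul, ← mul_assoc,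
    ← Fintype.card_subtype, ← card_mul, Nat.cast_mul, _root_.mul_inv_rev,
    inv_mul_cancel_right₀ (Nat.cast_ne_zero.2 card_ne_zero)]
  rfl

lemma sum_mmtTerm (m : ℕ) : ∑ r ∈ Finset.piAntidiag Finset.univ m, mmtTerm β θ φ A r =
    (m.factorial : K)⁻¹ * colorSum (Fin m) β θ φ A := by
  have maps_to : ∀ f ∈ (Finset.univ : Finset (Fin m → ι)),
      colorCount f ∈ Finset.piAntidiag Finset.univ m := fun f _ =>
    Finset.mem_piAntidiag.2 ⟨(sum_colorCount f).trans (Fintype.card_fin m), by simp⟩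
  rw [colorSum, ← Finset.sum_fiberwise_of_maps_to maps_to, Finset.mul_sum]
  refine Finset.sum_congr rfl fun r hr => ?_
  have sum_eq := (Finset.mem_piAntidiag.1 hr).1.trans (Fintype.card_fin m).symm
  rw [mmtTerm_eq_sum_colorings β θ φ A sum_eq, Fintype.card_fin]

end MMTTerm

section Regrouping

variable {κ μ E : Type*} [NormedAddCommGroup E] [CompleteSpace E]

lemma hasSum_of_hasSum_fiberwise (deg : κ → μ) {F : μ → Finset κ}
    (mem_fiber : ∀ x m, x ∈ F m ↔ deg x = m) {u : κ → E} {b : κ → ℝ} (norm_le : ∀ x, ‖u x‖ ≤ b x)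
    (summable_bound : Summable fun m => ∑ x ∈ F m, b x) {s : E}
    (hasSum_fibers : HasSum (fun m => ∑ x ∈ F m, u x) s) : HasSum u s := by
  have fiber_eq (m : μ) : deg ⁻¹' {m} = F m := Set.ext fun x => (mem_fiber x m).symm
  have summable_b : Summable b := by
    refine (summable_partition (s := fun m => (F m : Set κ)) (fun x => (norm_nonneg _).trans
      (norm_le x)) fun x => ⟨deg x, (mem_fiber x _).2 rfl, fun m hm =>
        ((mem_fiber x m).1 hm).symm⟩).2 ⟨fun m => (F m).summable b, ?_⟩
    simpa only [Finset.tsum_subtype'] using summable_bound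
  have hasSum_tsum := (Summable.of_norm_bounded summable_b norm_le).hasSum
  have tsum_fiber (m : μ) : ∑' x : deg ⁻¹' {m}, u x = ∑ x ∈ F m, u x := by
    rw [fiber_eq, Finset.tsum_subtype']
  have fiberwise := hasSum_tsum.tsum_fiberwise deg
  simp only [tsum_fiber] at fiberwise
  exact fiberwise.unique hasSum_fibers ▸ hasSum_tsum

end Regrouping

section Maps

variable {V ι : Type*} [Fintype V] [Fintype ι]

lemma map_ppermB [DecidableEq V] {R S : Type*} [CommRing R] [CommRing S] (f : R →+* S) (β : R)
    (θ φ : V → R) (M : Matrix V V R) :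
    f (ppermB β θ φ M) = ppermB (f β) (f ∘ θ) (f ∘ φ) (M.map f) := by
  simp [ppermB]

lemma map_colorSum [DecidableEq V] {R S : Type*} [CommRing R] [CommRing S] (f : R →+* S) (β : R)
    (θ φ : ι → R) (A : Matrix ι ι R) :
    f (colorSum V β θ φ A) = colorSum V (f β) (f ∘ θ) (f ∘ φ) (A.map f) := by
  simp only [colorSum, map_sum, map_ppermB]
  rfl

variable [DecidableEq ι]

lemma map_mmtTerm {K L : Type*} [Field K] [Field L] (f : K →+* L) (β : K) (θ φ : ι → K)
    (A : Matrix ι ι K) (r : ι → ℕ) :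
    f (mmtTerm β θ φ A r) = mmtTerm (f β) (f ∘ θ) (f ∘ φ) (A.map f) r := by
  rw [mmtTerm, map_mul, map_inv₀, map_natCast, map_ppermB]
  rfl

lemma norm_ppermB_le [DecidableEq V] {R : Type*} [NormedCommRing R] [NormOneClass R]
    [NormMulClass R] (β : R) (θ φ : V → R) (M : Matrix V V R) :
    ‖ppermB β θ φ M‖ ≤ ppermB ‖β‖ (norm ∘ θ) (norm ∘ φ) (M.map norm) :=
  (norm_sum_le ..).trans_eq <| by simp [ppermB, norm_prod]

variable {𝕜 : Type*} [RCLike 𝕜] (β : 𝕜) (θ φ : ι → 𝕜) (A : Matrix ι ι 𝕜)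

lemma norm_mmtTerm_le (r : ι → ℕ) :
    ‖mmtTerm β θ φ A r‖ ≤ mmtTerm ‖β‖ (norm ∘ θ) (norm ∘ φ) (A.map norm) r := by
  rw [mmtTerm, norm_mul, norm_inv, RCLike.norm_natCast]
  exact mul_le_mul_of_nonneg_left (norm_ppermB_le ..) (by positivity)

lemma hasSum_mmtTerm_of_hasSum_colorSum {s : 𝕜}
    (summable_norm : Summable fun m : ℕ =>
      (m.factorial : ℝ)⁻¹ * colorSum (Fin m) ‖β‖ (norm ∘ θ) (norm ∘ φ) (A.map norm))
    (hsum : HasSum (fun m : ℕ => (m.factorial : 𝕜)⁻¹ * colorSum (Fin m) β θ φ A) s) :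
    HasSum (mmtTerm β θ φ A) s := by
  simp only [← sum_mmtTerm] at summable_norm hsum
  exact hasSum_of_hasSum_fiberwise (∑ i, · i) (by simp) (norm_mmtTerm_le β θ φ A) summable_norm
    hsum

end Maps

section SmallMatrices

open Complex Metric Topology

attribute [local instance] Matrix.linftyOpNormedRing Matrix.linftyOpNormedAlgebra

lemma exists_forall_of_eventually_nhds_zero {ι 𝕜 : Type*} [Finite ι] [NormedField 𝕜]
    {P : Matrix ι ι 𝕜 → Prop} (h : ∀ᶠ A in 𝓝 0, P A) :
    ∃ ε > 0, ∀ A : Matrix ι ι 𝕜, (∀ i j, ‖A i j‖ < ε) → P A := by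
  cases nonempty_fintype ι
  obtain ⟨ε, hε, ball_subset⟩ := (Metric.mem_nhds_iff (α := ι → ι → 𝕜)).1 h
  refine ⟨ε, hε, fun A hA => ball_subset (mem_ball_zero_iff.2 ?_)⟩
  exact (pi_norm_lt_iff hε).2 fun i => (pi_norm_lt_iff hε).2 (hA i)

variable {ι : Type*} [Fintype ι] [DecidableEq ι]

lemma eventually_det_one_sub_smul_mem_slitPlane (R : ℝ) :
    ∀ᶠ A : Matrix ι ι ℂ in 𝓝 0, ∀ t ∈ closedBall (0 : ℂ) R, (1 - t • A).det ∈ slitPlane := by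
  have continuous_det : Continuous fun p : Matrix ι ι ℂ × ℂ => (1 - p.2 • p.1).det :=
    (continuous_const.sub (continuous_snd.smul continuous_fst)).matrix_det
  refine (isCompact_closedBall 0 R).eventually_forall_of_forall_eventually fun t _ => ?_
  exact continuous_det.continuousAt.eventually (isOpen_slitPlane.mem_nhds (by simp))

lemma eventually_summable_pow {𝕜 : Type*} [RCLike 𝕜] :
    ∀ᶠ A : Matrix ι ι 𝕜 in 𝓝 0, Summable fun k : ℕ => A ^ k := by
  filter_upwards [ball_mem_nhds (0 : Matrix ι ι 𝕜) one_pos] with A hA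
  exact summable_geometric_of_norm_lt_one (mem_ball_zero_iff.1 hA)

end SmallMatrices

section NeumannSeries

variable {ι : Type*} [Fintype ι] [DecidableEq ι]

lemma inv_one_sub_eq_tsum_pow {R : Type*} [CommRing R] [TopologicalSpace R] [IsTopologicalRing R]
    [T2Space R] {A : Matrix ι ι R} (h : Summable fun k : ℕ => A ^ k) :
    (1 - A)⁻¹ = ∑' k : ℕ, A ^ k :=
  Matrix.inv_eq_right_inv h.one_sub_mul_tsum_pow

lemma map_ofReal_tsum_pow (A : Matrix ι ι ℝ) :
    (∑' k : ℕ, A ^ k).map Complex.ofReal = ∑' k : ℕ, A.map Complex.ofReal ^ k :=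
  calc (∑' k : ℕ, A ^ k).map Complex.ofReal = ∑' k : ℕ, (A ^ k).map Complex.ofReal :=
        Function.LeftInverse.map_tsum (L := .unconditional ℕ) (g := Complex.ofRealHom.mapMatrix) _
          (continuous_id.matrix_map Complex.continuous_ofReal)
          (continuous_id.matrix_map Complex.continuous_re) fun M => by ext; simp
    _ = ∑' k : ℕ, A.map Complex.ofReal ^ k :=
        tsum_congr fun k => map_pow Complex.ofRealHom.mapMatrix A k

end NeumannSeries

section MasterTheorem

open Complex Metric

variable {ι : Type*} [Fintype ι] [DecidableEq ι]

lemma summable_norm_colorSum (β : ℂ) (θ φ : ι → ℂ) {A : Matrix ι ι ℂ} {R : ℝ} (hR : 1 < R)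
    (h : ∀ t ∈ ball (0 : ℂ) R, (1 - t • A.map (ofReal ∘ norm)).det ∈ slitPlane) :
    Summable fun m : ℕ =>
      (m.factorial : ℝ)⁻¹ * colorSum (Fin m) ‖β‖ (norm ∘ θ) (norm ∘ φ) (A.map norm) := by
  have summable_complex :=
    (hasSum_colorSum ‖β‖ (ofReal ∘ norm ∘ θ) (ofReal ∘ norm ∘ φ) hR h).summable
  refine summable_ofReal.1 (summable_complex.congr fun m => ?_)
  rw [ofReal_mul, ofReal_inv, ofReal_natCast]
  congr 1
  exact (map_colorSum ofRealHom ..).symm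

lemma hasSum_mmtTerm_of_hasSum_map_ofReal {β : ℝ} {θ φ : ι → ℝ} {A : Matrix ι ι ℝ}
    (hdet : (1 - A.map ofReal).det ∈ slitPlane)
    (hsum : HasSum (mmtTerm (β : ℂ) (ofReal ∘ θ) (ofReal ∘ φ) (A.map ofReal))
      (exp ((ofReal ∘ θ) ⬝ᵥ (∑' k : ℕ, A.map ofReal ^ k) *ᵥ (ofReal ∘ φ)) /
        (1 - A.map ofReal).det ^ (β : ℂ))) :
    HasSum (mmtTerm β θ φ A)
      (Real.exp (θ ⬝ᵥ (∑' k : ℕ, A ^ k) *ᵥ φ) / (1 - A).det ^ β) := by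
  have det_eq : (1 - A.map ofReal).det = ((1 - A).det : ℂ) := by
    have := (RingHom.map_det ofRealHom (1 - A)).symm
    rwa [map_sub, map_one] at this
  have dot_eq : (ofReal ∘ θ) ⬝ᵥ (∑' k : ℕ, A.map ofReal ^ k) *ᵥ (ofReal ∘ φ) =
      (θ ⬝ᵥ (∑' k : ℕ, A ^ k) *ᵥ φ : ℝ) := by
    rw [← map_ofReal_tsum_pow]
    simp [dotProduct, mulVec]
  rw [det_eq] at hdet hsum
  rw [dot_eq, ← ofReal_exp, ← ofReal_cpow (ofReal_mem_slitPlane.1 hdet).le, ← ofReal_div] at hsum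
  exact hasSum_ofReal.1 (hsum.congr_fun fun r => map_mmtTerm ofRealHom β θ φ A r)

variable (ι) in
theorem partial_permutation_MMT_general :
    ∃ ε > 0, ∀ (β : ℂ) (A : Matrix ι ι ℂ) (θ φ : ι → ℂ), (∀ i j, ‖A i j‖ < ε) →
      (1 - A).det ∈ slitPlane ∧ Summable (fun k : ℕ => A ^ k) ∧
        HasSum (mmtTerm β θ φ A)
          (exp (θ ⬝ᵥ (∑' k : ℕ, A ^ k) *ᵥ φ) / (1 - A).det ^ β) := by
  obtain ⟨ε, hε, small⟩ := exists_forall_of_eventually_nhds_zero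
    ((eventually_det_one_sub_smul_mem_slitPlane (ι := ι) 2).and eventually_summable_pow)
  refine ⟨ε, hε, fun β A θ φ hA => ?_⟩
  obtain ⟨hdet, hpow⟩ := small A hA
  have hdet_norm := (small (A.map (ofReal ∘ norm)) (by simpa using hA)).1
  refine ⟨by simpa using hdet 1 (by simp), hpow, inv_one_sub_eq_tsum_pow hpow ▸ ?_⟩
  exact hasSum_mmtTerm_of_hasSum_colorSum β θ φ A
    (summable_norm_colorSum β θ φ one_lt_two fun t ht => hdet_norm t (ball_subset_closedBall ht))
    (hasSum_colorSum β θ φ one_lt_two fun t ht => hdet t (ball_subset_closedBall ht))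

end MasterTheorem

/-- The Partial Permutation MacMahon Master Theorem:
`Σ_r (1/r!) pperm_{β,θ,φ} A(n^r,n^r) = exp(θ (I-A)⁻¹ φᵀ) / det(I-A)^β`,
with `(I-A)⁻¹ = Σ_{k≥0} A^k`, for sufficiently small `A`. -/
theorem partial_permutation_MMT (n : ℕ) (β : ℝ) :
    ∃ ε > (0 : ℝ), ∀ (A : Matrix (Fin n) (Fin n) ℝ) (θ φ : Fin n → ℝ),
      (∀ i j, |A i j| < ε) →
      ∑' r : Fin n → ℕ, ((∏ i, (r i).factorial : ℕ) : ℝ)⁻¹ *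
          ppermB β (fun k => θ k.1) (fun k => φ k.1) (repA A r)
        = Real.exp (θ ⬝ᵥ (∑' k : ℕ, A ^ k).mulVec φ) / Matrix.det (1 - A) ^ β := by
  obtain ⟨ε, hε, general⟩ := partial_permutation_MMT_general (Fin n)
  refine ⟨ε, hε, fun A θ φ hA => ?_⟩
  obtain ⟨hdet, -, hsum⟩ := general β (A.map Complex.ofReal) (Complex.ofReal ∘ θ)
    (Complex.ofReal ∘ φ) (by simpa using hA)
  exact (hasSum_mmtTerm_of_hasSum_map_ofReal hdet hsum).tsum_eq
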